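/- A linear map L : 𝒮ⁿ → 𝒮ⁿ on the space of n×n real symmetric matrices satisfies L(COPₙ) = COPₙ if and only if there exists a nonnegative monomial matrix M ∈ Mₙ(ℝ) such that L(X) = M X Mᵗ for all X ∈ 𝒮ⁿ. -/

import Mathlib

open Matrix

/-- The space `𝒮ⁿ` of `n × n` real symmetric matrices, as a submodule of the matrices. -/
def SymMat (n : ℕ) : Submodule ℝ (Matrix (Fin n) (Fin n) ℝ) where
  carrier := {A | A.IsSymm}
  add_mem' ha hb := ha.add hb
  zero_mem' := Matrix.isSymm_zero
  smul_mem' c A hA := hA.smul c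

/-- The cone of copositive matrices in `𝒮ⁿ`. -/
def COPcone (n : ℕ) : Set (SymMat n) :=
  {A | ∀ x : Fin n → ℝ, (∀ i, 0 ≤ x i) → 0 ≤ x ⬝ᵥ ((A : Matrix (Fin n) (Fin n) ℝ) *ᵥ x)}

/-- A monomial matrix: exactly one nonzero entry in each row and in each column. -/
def IsMonomial {n : ℕ} (M : Matrix (Fin n) (Fin n) ℝ) : Prop :=
  (∀ i, ∃! j, M i j ≠ 0) ∧ (∀ j, ∃! i, M i j ≠ 0)

namespace CopAux

/-- symmetrised product of two vectors -/
noncomputable def B {n : ℕ} (u v : Fin n → ℝ) : SymMat n :=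
  ⟨Matrix.of fun i j => (u i * v j + v i * u j) / 2, by
    show Matrix.IsSymm _
    ext i j
    simp [Matrix.transpose_apply]; ring⟩

/-- bilinear evaluation -/
def bil {n : ℕ} (x y : Fin n → ℝ) : SymMat n →ₗ[ℝ] ℝ where
  toFun A := x ⬝ᵥ ((A : Matrix (Fin n) (Fin n) ℝ) *ᵥ y)
  map_add' A A' := by simp [Matrix.add_mulVec, dotProduct_add]
  map_smul' c A := by simp [Matrix.smul_mulVec, dotProduct_smul]

theorem bil_def {n : ℕ} (x y : Fin n → ℝ) (A : SymMat n) :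
    bil x y A = x ⬝ᵥ ((A : Matrix (Fin n) (Fin n) ℝ) *ᵥ y) := rfl

theorem bil_sum {n : ℕ} (x y : Fin n → ℝ) (A : SymMat n) :
    bil x y A = ∑ i, ∑ j, A.1 i j * (x i * y j) := by
  simp only [bil_def, dotProduct, mulVec, Finset.mul_sum]
  refine Finset.sum_congr rfl fun i _ => Finset.sum_congr rfl fun j _ => by ring

theorem symm_apply {n : ℕ} (A : SymMat n) (i j : Fin n) : A.1 i j = A.1 j i := by
  have h : A.1.IsSymm := A.2
  exact h.apply j i

theorem bil_comm {n : ℕ} (x y : Fin n → ℝ) (A : SymMat n) : bil x y A = bil y x A := by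
  rw [bil_sum, bil_sum, Finset.sum_comm]
  refine Finset.sum_congr rfl fun i _ => Finset.sum_congr rfl fun j _ => ?_
  rw [symm_apply A j i]; ring

theorem bil_B {n : ℕ} (x y u v : Fin n → ℝ) :
    bil x y (B u v) = ((u ⬝ᵥ x) * (v ⬝ᵥ y) + (v ⬝ᵥ x) * (u ⬝ᵥ y)) / 2 := by
  rw [bil_sum]
  simp only [B, Matrix.of_apply, dotProduct, Finset.sum_mul_sum]
  rw [← Finset.sum_add_distrib, Finset.sum_div]
  refine Finset.sum_congr rfl fun i _ => ?_
  rw [← Finset.sum_add_distrib, Finset.sum_div]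
  refine Finset.sum_congr rfl fun j _ => by ring

theorem bil_add {n : ℕ} (x y z : Fin n → ℝ) (A : SymMat n) :
    bil (x + y) z A = bil x z A + bil y z A := by
  simp [bil_def, add_dotProduct]

theorem bil_smul {n : ℕ} (c : ℝ) (x z : Fin n → ℝ) (A : SymMat n) :
    bil (c • x) z A = c * bil x z A := by
  simp [bil_def, smul_dotProduct]

theorem bil_add_right {n : ℕ} (x y z : Fin n → ℝ) (A : SymMat n) :
    bil z (x + y) A = bil z x A + bil z y A := by
  rw [bil_comm, bil_add, bil_comm x, bil_comm y]

theorem bil_smul_right {n : ℕ} (c : ℝ) (x z : Fin n → ℝ) (A : SymMat n) :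
    bil z (c • x) A = c * bil z x A := by
  rw [bil_comm, bil_smul, bil_comm x]

theorem B_comm {n : ℕ} (u v : Fin n → ℝ) : B u v = B v u := by
  apply Subtype.ext; ext i j; simp [B]; ring

theorem B_add {n : ℕ} (u u' v : Fin n → ℝ) : B (u + u') v = B u v + B u' v := by
  apply Subtype.ext; ext i j; simp [B]; ring

theorem B_smul {n : ℕ} (c : ℝ) (u v : Fin n → ℝ) : B (c • u) v = c • B u v := by
  apply Subtype.ext; ext i j; simp [B]; ring

theorem B_add_right {n : ℕ} (u u' v : Fin n → ℝ) : B v (u + u') = B v u + B v u' := by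
  rw [B_comm, B_add, B_comm u, B_comm u']

theorem B_smul_right {n : ℕ} (c : ℝ) (u v : Fin n → ℝ) : B v (c • u) = c • B v u := by
  rw [B_comm, B_smul, B_comm u]

theorem B_cop {n : ℕ} (v : Fin n → ℝ) : B v v ∈ COPcone n := by
  intro x _
  rw [← bil_def, bil_B]
  nlinarith [mul_self_nonneg (v ⬝ᵥ x)]

/-- basis vectors -/
abbrev e {n : ℕ} (i : Fin n) : Fin n → ℝ := Pi.single i 1

theorem rep {n : ℕ} (A : SymMat n) : A = ∑ i, ∑ j, A.1 i j • B (e i) (e j) := by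
  apply Subtype.ext
  ext k l
  simp only [Submodule.coe_sum, Matrix.sum_apply, Submodule.coe_smul, Matrix.smul_apply, B,
    Matrix.of_apply, e, Pi.single_apply, smul_eq_mul]
  have : ∀ i j : Fin n, A.1 i j * (((if k = i then (1:ℝ) else 0) * (if l = j then 1 else 0)
      + (if k = j then 1 else 0) * (if l = i then 1 else 0)) / 2)
      = (if k = i then (if l = j then A.1 i j / 2 else 0) else 0)
        + (if l = i then (if k = j then A.1 i j / 2 else 0) else 0) := by
    intro i j
    split_ifs <;> ring
  simp only [this, Finset.sum_add_distrib]
  have h1 : ∀ (k l : Fin n), ∑ i, ∑ j, (if k = i then (if l = j then A.1 i j / 2 else 0) else 0)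
      = A.1 k l / 2 := by
    intro k l
    rw [Finset.sum_eq_single k]
    · simp
    · intro b _ hb; simp [Ne.symm hb]
    · simp
  rw [h1, h1, symm_apply A l k]; ring

theorem ext_fun {n : ℕ} {θ θ' : SymMat n →ₗ[ℝ] ℝ} (h : ∀ v, θ (B v v) = θ' (B v v)) : θ = θ' := by
  have h2 : ∀ u v, θ (B u v) = θ' (B u v) := by
    intro u v
    have h1 := h (u + v)
    simp only [B_add, B_add_right, map_add, B_comm v u] at h1
    linarith [h u, h v]
  ext A
  rw [rep A]
  simp [map_sum, h2]

theorem extremal {n : ℕ} (x : Fin n → ℝ) (θ : SymMat n →ₗ[ℝ] ℝ) (C : ℝ)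
    (h0 : ∀ v, 0 ≤ θ (B v v)) (h1 : ∀ v, θ (B v v) ≤ C * (v ⬝ᵥ x) ^ 2) :
    ∃ d : ℝ, ∀ A, θ A = d * bil x x A := by
  have hz : ∀ u, u ⬝ᵥ x = 0 → θ (B u u) = 0 := by
    intro u hu
    have := h1 u
    rw [hu] at this
    exact le_antisymm (by simpa using this) (h0 u)
  have hz2 : ∀ u v, u ⬝ᵥ x = 0 → θ (B u v) = 0 := by
    intro u v hu
    have key : ∀ t : ℝ, 0 ≤ 2 * t * θ (B u v) + θ (B v v) := by
      intro t
      have := h0 (t • u + v)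
      simp only [B_add, B_add_right, B_smul, B_smul_right, map_add, map_smul, smul_eq_mul, hz u hu,
        B_comm v u] at this
      linarith
    by_contra hne
    have := key (-(θ (B v v) + 1) / (2 * θ (B u v)))
    have h3 : 2 * (-(θ (B v v) + 1) / (2 * θ (B u v))) * θ (B u v) = -(θ (B v v) + 1) := by
      field_simp
    linarith
  by_cases hx : x = 0
  · subst hx
    refine ⟨0, fun A => ?_⟩
    have : θ = 0 := ext_fun fun v => by simpa using hz v (by simp)
    simp [this]
  have hxx : x ⬝ᵥ x ≠ 0 := by simpa using hx
  refine ⟨θ (B x x) / (x ⬝ᵥ x) ^ 2, fun A => ?_⟩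
  have : θ = (θ (B x x) / (x ⬝ᵥ x) ^ 2) • bil x x := by
    apply ext_fun
    intro v
    set c := (v ⬝ᵥ x) / (x ⬝ᵥ x) with hc
    obtain ⟨u, hu⟩ : ∃ u, v = u + c • x := ⟨v - c • x, by simp⟩
    have hux : u ⬝ᵥ x = 0 := by
      have : u = v - c • x := by rw [hu]; simp
      rw [this, sub_dotProduct, smul_dotProduct, hc, smul_eq_mul]
      field_simp; ring
    have e1 : θ (B v v) = c ^ 2 * θ (B x x) := by
      conv_lhs => rw [hu]
      simp only [B_add, B_add_right, B_smul, B_smul_right, map_add, map_smul, smul_eq_mul,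
        B_comm x u, hz2 u _ hux]
      ring
    rw [e1, LinearMap.smul_apply, bil_B, smul_eq_mul, hc]
    field_simp
    ring
  conv_lhs => rw [this]
  simp

/-- pairing -/
def pr {n : ℕ} (U : Fin n → Fin n → ℝ) : SymMat n →ₗ[ℝ] ℝ where
  toFun A := ∑ i, ∑ j, A.1 i j * U i j
  map_add' A A' := by simp [add_mul, Finset.sum_add_distrib]
  map_smul' c A := by simp [mul_assoc, Finset.mul_sum]

theorem pr_def {n : ℕ} (U : Fin n → Fin n → ℝ) (A : SymMat n) :
    pr U A = ∑ i, ∑ j, A.1 i j * U i j := rfl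

/-- coordinates of a functional -/
noncomputable def co {n : ℕ} (θ : SymMat n →ₗ[ℝ] ℝ) : Fin n → Fin n → ℝ := fun i j => θ (B (e i) (e j))

theorem pr_co {n : ℕ} (θ : SymMat n →ₗ[ℝ] ℝ) : pr (co θ) = θ := by
  ext A
  conv_rhs => rw [rep A]
  simp [pr_def, co, map_sum]

/-- rank one -/
def V {n : ℕ} (y : Fin n → ℝ) : Fin n → Fin n → ℝ := fun i j => y i * y j

theorem pr_V {n : ℕ} (y : Fin n → ℝ) : pr (V y) = bil y y := by
  ext A; rw [bil_sum, pr_def]; rfl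

theorem pr_comb {n : ℕ} (s t : ℝ) (U W : Fin n → Fin n → ℝ) (A : SymMat n) :
    pr (s • U + t • W) A = s * pr U A + t * pr W A := by
  simp only [pr_def, Finset.mul_sum, ← Finset.sum_add_distrib]
  refine Finset.sum_congr rfl fun i _ => Finset.sum_congr rfl fun j _ => ?_
  simp; ring

/-- all ones -/
noncomputable def J (n : ℕ) : SymMat n := B 1 1

theorem bil_J {n : ℕ} (x : Fin n → ℝ) : bil x x (J n) = (∑ i, x i) ^ 2 := by
  rw [J, bil_B]; simp [dotProduct]; ring

/-- generators -/
def K0 (n : ℕ) : Set (Fin n → Fin n → ℝ) := V '' (stdSimplex ℝ (Fin n))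

theorem K0_compact (n : ℕ) : IsCompact (K0 n) := by
  apply (isCompact_stdSimplex ℝ (Fin n)).image
  unfold V
  fun_prop

theorem K_prop {n : ℕ} (U : Fin n → Fin n → ℝ) (hU : U ∈ convexHull ℝ (K0 n)) :
    (∀ A ∈ COPcone n, 0 ≤ pr U A) ∧ pr U (J n) = 1 ∧ ∀ i j, U i j = U j i := by
  have : convexHull ℝ (K0 n) ⊆ {U | (∀ A ∈ COPcone n, 0 ≤ pr U A) ∧ pr U (J n) = 1 ∧
      ∀ i j, U i j = U j i} := by
    apply convexHull_min
    · rintro _ ⟨y, hy, rfl⟩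
      refine ⟨fun A hA => ?_, ?_, fun i j => mul_comm _ _⟩
      · rw [pr_V]; exact hA y hy.1
      · rw [pr_V, bil_J, hy.2]; norm_num
    · rintro U ⟨h1, h2, h3⟩ W ⟨g1, g2, g3⟩ s t hs ht hst
      refine ⟨fun A hA => ?_, ?_, fun i j => ?_⟩
      · rw [pr_comb]
        have := mul_nonneg hs (h1 A hA)
        have := mul_nonneg ht (g1 A hA)
        linarith
      · rw [pr_comb, h2, g2]; linarith
      · simp [h3 i j, g3 i j]
  exact this hU

theorem pr_inj {n : ℕ} {U W : Fin n → Fin n → ℝ} (hU : ∀ i j, U i j = U j i)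
    (hW : ∀ i j, W i j = W j i) (h : pr U = pr W) : U = W := by
  have key : ∀ (U : Fin n → Fin n → ℝ), (∀ i j, U i j = U j i) → ∀ k l,
      pr U (B (e k) (e l)) = U k l := by
    intro U hU k l
    simp only [pr_def, B, Matrix.of_apply, e, Pi.single_apply]
    have : ∀ i j : Fin n, (((if i = k then (1:ℝ) else 0) * (if j = l then 1 else 0)
      + (if i = l then 1 else 0) * (if j = k then 1 else 0)) / 2) * U i j
      = (if i = k then (if j = l then U i j / 2 else 0) else 0)
        + (if i = l then (if j = k then U i j / 2 else 0) else 0) := by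
      intro i j
      split_ifs <;> ring
    simp only [this, Finset.sum_add_distrib]
    have h1 : ∀ (k l : Fin n), ∑ i, ∑ j, (if i = k then (if j = l then U i j / 2 else 0) else 0)
        = U k l / 2 := by
      intro k l
      rw [Finset.sum_eq_single k]
      · simp
      · intro b _ hb; simp [hb]
      · simp
    rw [h1, h1, hU l k]; ring
  funext k l
  rw [← key U hU, ← key W hW, h]

theorem compact_hull {E : Type} [NormedAddCommGroup E] [NormedSpace ℝ E] [FiniteDimensional ℝ E]
    {s : Set E} (hs : IsCompact s) : IsCompact (convexHull ℝ s) := by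
  have key : convexHull ℝ s = ⋃ k ∈ Finset.range (Module.finrank ℝ E + 2),
      (fun p : (Fin k → ℝ) × (Fin k → E) => ∑ i, p.1 i • p.2 i) ''
        (stdSimplex ℝ (Fin k) ×ˢ Set.univ.pi fun _ => s) := by
    ext x
    simp only [Set.mem_iUnion]
    constructor
    · intro hx
      obtain ⟨ι, _, z, w, hz, hind, hw, hw1, hx⟩ := eq_pos_convex_span_of_mem_convexHull hx
      have hcard := hind.card_le_finrank_succ
      have hle := Submodule.finrank_le (vectorSpan ℝ (Set.range z))
      refine ⟨Fintype.card ι, by rw [Finset.mem_range]; omega, ?_⟩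
      let f := (Fintype.equivFin ι).symm
      refine ⟨(w ∘ f, z ∘ f), ⟨⟨fun i => (hw _).le, ?_⟩, fun i _ => hz ⟨_, rfl⟩⟩, ?_⟩
      · rw [← hw1]; exact Equiv.sum_comp f w
      · rw [← hx]; exact Equiv.sum_comp f fun i => w i • z i
    · rintro ⟨k, _, ⟨w, z⟩, ⟨hw, hz⟩, rfl⟩
      exact (convex_convexHull ℝ s).sum_mem (fun i _ => hw.1 i) hw.2
        fun i _ => subset_convexHull ℝ s (hz i (Set.mem_univ i))
  rw [key]
  refine Finset.isCompact_biUnion _ fun k _ => ?_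
  refine IsCompact.image ((isCompact_stdSimplex ℝ (Fin k)).prod
    (isCompact_univ_pi fun _ => hs)) ?_
  fun_prop

theorem duality {n : ℕ} (θ : SymMat n →ₗ[ℝ] ℝ) (h : ∀ A ∈ COPcone n, 0 ≤ θ A)
    (h1 : θ (J n) = 1) : co θ ∈ convexHull ℝ (K0 n) := by
  by_contra hn
  obtain ⟨f, s, hf1, hf2⟩ := geometric_hahn_banach_point_closed (convex_convexHull ℝ (K0 n))
    (compact_hull (K0_compact n)).isClosed hn
  -- symmetric matrix representing the functional
  let A : SymMat n := ∑ i, ∑ j, f (Pi.single i (Pi.single j 1)) • B (e i) (e j)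
  have hfU : ∀ U : Fin n → Fin n → ℝ, f U = ∑ i, ∑ j, f (Pi.single i (Pi.single j 1)) * U i j := by
    intro U
    have : U = ∑ i, ∑ j, U i j • (Pi.single i (Pi.single j 1) : Fin n → Fin n → ℝ) := by
      funext k l
      simp [Finset.sum_apply, Pi.single_apply, ite_apply]
    conv_lhs => rw [this]
    simp [map_sum, mul_comm]
  have hθA : ∀ θ : SymMat n →ₗ[ℝ] ℝ, θ A = f (co θ) := by
    intro θ
    rw [hfU]
    simp [A, map_sum, co]
  have hVco : ∀ y : Fin n → ℝ, co (bil y y) = V y := by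
    intro y
    funext i j
    simp [co, bil_B, V]; ring
  have hcop : A - s • J n ∈ COPcone n := by
    intro x hx
    rw [← bil_def, map_sub, map_smul, bil_J, hθA, hVco, smul_eq_mul]
    by_cases hs : ∑ i, x i = 0
    · have : x = 0 := by
        funext i
        exact (Finset.sum_eq_zero_iff_of_nonneg (fun i _ => hx i)).1 hs i (Finset.mem_univ i)
      subst this
      have : V (0 : Fin n → ℝ) = 0 := by funext i j; simp [V]
      simp [this]
    · set S := ∑ i, x i with hS
      have hy : V (S⁻¹ • x) ∈ K0 n := by
        refine ⟨_, ⟨fun i => ?_, ?_⟩, rfl⟩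
        · exact mul_nonneg (inv_nonneg.2 (Finset.sum_nonneg fun i _ => hx i)) (hx i)
        · simp [← Finset.mul_sum, ← hS, hs]
      have h3 := hf2 _ (subset_convexHull ℝ _ hy)
      have h4 : V x = S ^ 2 • V (S⁻¹ • x) := by
        funext i j; simp [V]; field_simp
      rw [h4, map_smul, smul_eq_mul]
      nlinarith [sq_nonneg S]
  have h5 := h _ hcop
  rw [map_sub, map_smul, h1, hθA] at h5
  simp at h5
  linarith

theorem J_zero {n : ℕ} (θ : SymMat n →ₗ[ℝ] ℝ) (h : ∀ A ∈ COPcone n, 0 ≤ θ A)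
    (h1 : θ (J n) = 0) : θ = 0 := by
  have key : ∀ A, θ A ≤ 0 := by
    intro A
    have hc : (∑ i, ∑ j, |A.1 i j|) • J n - A ∈ COPcone n := by
      intro x hx
      rw [← bil_def, map_sub, map_smul, bil_J, smul_eq_mul, bil_sum, sub_nonneg]
      simp only [Finset.sum_mul]
      refine Finset.sum_le_sum fun i _ => Finset.sum_le_sum fun j _ => ?_
      have hxi : ∀ i, x i ≤ ∑ i, x i := fun i =>
        Finset.single_le_sum (fun i _ => hx i) (Finset.mem_univ i)
      have : x i * x j ≤ (∑ i, x i) ^ 2 := by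
        rw [sq]
        exact mul_le_mul (hxi i) (hxi j) (hx j) ((hx i).trans (hxi i))
      calc A.1 i j * (x i * x j) ≤ |A.1 i j| * (x i * x j) :=
            mul_le_mul_of_nonneg_right (le_abs_self _) (mul_nonneg (hx i) (hx j))
        _ ≤ _ := mul_le_mul_of_nonneg_left this (abs_nonneg _)
    have := h _ hc
    rw [map_sub, map_smul, h1] at this
    simpa using this
  ext A
  have h2 := key (-A)
  rw [map_neg] at h2
  have := key A
  simp; linarith

theorem J_cop (n : ℕ) : J n ∈ COPcone n := B_cop _

theorem bijL {n : ℕ} (L : SymMat n →ₗ[ℝ] SymMat n) (hL : L '' COPcone n = COPcone n) :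
    ∃ R : SymMat n →ₗ[ℝ] SymMat n, (∀ A, L (R A) = A) ∧ (∀ A, R (L A) = A) ∧
      R '' COPcone n = COPcone n := by
  have hr : ∀ v, B v v ∈ LinearMap.range L := by
    intro v
    have := B_cop v
    rw [← hL] at this
    obtain ⟨A, _, hA⟩ := this
    exact ⟨A, hA⟩
  have hr2 : ∀ u v, B u v ∈ LinearMap.range L := by
    intro u v
    have : B u v = (2⁻¹ : ℝ) • (B (u + v) (u + v) - B u u - B v v) := by
      simp only [B_add, B_add_right, B_comm v u]
      module
    rw [this]
    exact Submodule.smul_mem _ _ (Submodule.sub_mem _ (Submodule.sub_mem _ (hr _) (hr _)) (hr _))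
  have hs : Function.Surjective L := by
    intro A
    have : A ∈ LinearMap.range L := by
      rw [rep A]
      exact Submodule.sum_mem _ fun i _ => Submodule.sum_mem _ fun j _ =>
        Submodule.smul_mem _ _ (hr2 _ _)
    exact this
  have hi : Function.Injective L := LinearMap.injective_iff_surjective.2 hs
  let E := LinearEquiv.ofBijective L ⟨hi, hs⟩
  have hE1 : ∀ A, L (E.symm A) = A := fun A => E.apply_symm_apply A
  have hE2 : ∀ A, E.symm (L A) = A := fun A => E.symm_apply_apply A
  refine ⟨E.symm.toLinearMap, hE1, hE2, ?_⟩
  ext A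
  constructor
  · rintro ⟨C, hC, rfl⟩
    rw [← hL] at hC
    obtain ⟨D, hD, rfl⟩ := hC
    simpa [hE2] using hD
  · intro hA
    refine ⟨L A, ?_, hE2 A⟩
    rw [← hL]; exact ⟨A, hA, rfl⟩

theorem pullback {n : ℕ} (L : SymMat n →ₗ[ℝ] SymMat n) (hL : L '' COPcone n = COPcone n)
    (x : Fin n → ℝ) (hx : ∀ i, 0 ≤ x i) :
    ∃ y : Fin n → ℝ, (∀ i, 0 ≤ y i) ∧ ∀ A, bil x x (L A) = bil y y A := by
  obtain ⟨R, hLR, hRL, hR⟩ := bijL L hL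
  set φ : SymMat n →ₗ[ℝ] ℝ := (bil x x).comp L with hφ
  have hφ0 : ∀ A ∈ COPcone n, 0 ≤ φ A := by
    intro A hA
    have : L A ∈ COPcone n := by rw [← hL]; exact ⟨A, hA, rfl⟩
    exact this x hx
  have hφA : ∀ A, bil x x (L A) = φ A := fun A => rfl
  set c := φ (J n) with hc
  have hc0 : 0 ≤ c := hφ0 _ (J_cop n)
  rcases hc0.eq_or_lt with h | h
  · refine ⟨0, fun i => le_rfl, fun A => ?_⟩
    rw [hφA, J_zero φ hφ0 h.symm]
    simp [bil_def]
  have hθ := duality (c⁻¹ • φ) (fun A hA => mul_nonneg (inv_nonneg.2 hc0) (hφ0 A hA))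
    (by simp [← hc, h.ne'])
  have hext : co (c⁻¹ • φ) ∈ (convexHull ℝ (K0 n)).extremePoints ℝ := by
    refine ⟨hθ, ?_⟩
    intro U hU W hW hseg
    obtain ⟨s, t, hs, ht, hst, hUW⟩ := hseg
    obtain ⟨hU1, hU2, hU3⟩ := K_prop U hU
    obtain ⟨hW1, hW2, hW3⟩ := K_prop W hW
    have hdec : ∀ A, c⁻¹ * φ A = s * pr U A + t * pr W A := by
      intro A
      rw [← pr_comb, hUW, pr_co]; rfl
    have hRc : ∀ v, R (B v v) ∈ COPcone n := fun v => by
      rw [← hR]; exact ⟨_, B_cop v, rfl⟩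
    obtain ⟨d, hd⟩ := extremal x ((pr U).comp R) (s⁻¹ * c⁻¹) (fun v => hU1 _ (hRc v)) (by
      intro v
      have h1 := hdec (R (B v v))
      rw [← hφA, hLR, bil_B] at h1
      have h2 := mul_nonneg ht.le (hW1 _ (hRc v))
      have h3 : s * pr U (R (B v v)) ≤ c⁻¹ * (v ⬝ᵥ x) ^ 2 := by
        have : (v ⬝ᵥ x * v ⬝ᵥ x + v ⬝ᵥ x * v ⬝ᵥ x) / 2 = (v ⬝ᵥ x) ^ 2 := by ring
        rw [this] at h1
        linarith
      rw [LinearMap.comp_apply, mul_assoc, inv_mul_eq_div, le_div_iff₀ hs]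
      linarith)
    have hd2 : ∀ A, pr U A = d * φ A := by
      intro A
      have := hd (L A)
      rwa [LinearMap.comp_apply, hRL, hφA] at this
    have hdc : d = c⁻¹ := by
      have := hd2 (J n)
      rw [hU2, ← hc] at this
      field_simp; linarith
    apply pr_inj hU3
    · intro i j; simp only [co]; rw [B_comm]
    · rw [pr_co]; ext A; rw [hd2, hdc]; rfl
  obtain ⟨y, hy, hyV⟩ := extremePoints_convexHull_subset hext
  refine ⟨Real.sqrt c • y, fun i => mul_nonneg (Real.sqrt_nonneg _) (hy.1 i), fun A => ?_⟩
  rw [bil_smul, bil_smul_right, ← mul_assoc, Real.mul_self_sqrt hc0, ← pr_V y, hyV, pr_co, hφA]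
  simp [h.ne']

end CopAux

namespace CopAux

set_option maxHeartbeats 1000000 in
theorem cross_aux {n : ℕ} (a b : Fin n → ℝ) (ha : ∀ i, 0 ≤ a i) (hb : ∀ i, 0 ≤ b i)
    (s : SymMat n →ₗ[ℝ] ℝ)
    (H : ∀ t : ℝ, 0 < t → ∃ w : Fin n → ℝ, (∀ i, 0 ≤ w i) ∧
      ∀ A, bil a a A + 2 * t * s A + t ^ 2 * bil b b A = bil w w A)
    (k l : Fin n) (hkl : 0 < a k * b l - a l * b k) : s = bil a b := by
  set D := a k * b l - a l * b k with hD
  have hminor : ∀ t : ℝ, 0 < t → ∀ u v : Fin n → ℝ,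
      ((u ⬝ᵥ a) ^ 2 + 2 * t * s (B u u) + t ^ 2 * (u ⬝ᵥ b) ^ 2) *
      ((v ⬝ᵥ a) ^ 2 + 2 * t * s (B v v) + t ^ 2 * (v ⬝ᵥ b) ^ 2) =
      ((u ⬝ᵥ a) * (v ⬝ᵥ a) + 2 * t * s (B u v) + t ^ 2 * ((u ⬝ᵥ b) * (v ⬝ᵥ b))) ^ 2 := by
    intro t ht u v
    obtain ⟨w, _, hw⟩ := H t ht
    have h1 := hw (B u u)
    have h2 := hw (B v v)
    have h3 := hw (B u v)
    simp only [bil_B] at h1 h2 h3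
    have h1' : (u ⬝ᵥ a) ^ 2 + 2 * t * s (B u u) + t ^ 2 * (u ⬝ᵥ b) ^ 2 = (u ⬝ᵥ w) ^ 2 := by
      linarith
    have h2' : (v ⬝ᵥ a) ^ 2 + 2 * t * s (B v v) + t ^ 2 * (v ⬝ᵥ b) ^ 2 = (v ⬝ᵥ w) ^ 2 := by
      linarith
    have h3' : (u ⬝ᵥ a) * (v ⬝ᵥ a) + 2 * t * s (B u v) + t ^ 2 * ((u ⬝ᵥ b) * (v ⬝ᵥ b))
        = (u ⬝ᵥ w) * (v ⬝ᵥ w) := by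
      linarith
    rw [h1', h2', h3']; ring
  obtain ⟨p, hpa, hpb⟩ : ∃ p : Fin n → ℝ, p ⬝ᵥ a = 1 ∧ p ⬝ᵥ b = 0 := by
    refine ⟨D⁻¹ • (b l • e k - b k • e l), ?_, ?_⟩
    · simp only [smul_dotProduct, sub_dotProduct, e, single_dotProduct, smul_eq_mul]
      rw [inv_mul_eq_div, div_eq_one_iff_eq hkl.ne']; rw [hD]; ring
    · simp only [smul_dotProduct, sub_dotProduct, e, single_dotProduct, smul_eq_mul]; ring
  obtain ⟨q, hqa, hqb⟩ : ∃ q : Fin n → ℝ, q ⬝ᵥ a = 0 ∧ q ⬝ᵥ b = 1 := by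
    refine ⟨D⁻¹ • (a k • e l - a l • e k), ?_, ?_⟩
    · simp only [smul_dotProduct, sub_dotProduct, e, single_dotProduct, smul_eq_mul]; ring
    · simp only [smul_dotProduct, sub_dotProduct, e, single_dotProduct, smul_eq_mul]
      rw [inv_mul_eq_div, div_eq_one_iff_eq hkl.ne']; rw [hD]; ring
  have hm : ∀ t : ℝ, 0 < t → (1 + 2 * t * s (B p p)) * (2 * t * s (B q q) + t ^ 2)
      = (2 * t * s (B p q)) ^ 2 := by
    intro t ht
    have := hminor t ht p q
    rw [hpa, hpb, hqa, hqb] at this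
    linarith
  have m1 := hm 1 one_pos
  have m2 := hm 2 two_pos
  have m3 := hm 3 three_pos
  have hqq : s (B q q) = 0 := by nlinarith
  have hpp : s (B p p) = 0 := by rw [hqq] at m1 m2; nlinarith
  have hpq : (2 * s (B p q)) ^ 2 = 1 := by rw [hqq, hpp] at m1; linarith
  have hu : ∀ u : Fin n → ℝ, u ⬝ᵥ a = 0 → u ⬝ᵥ b = 0 →
      s (B u u) = 0 ∧ s (B u p) = 0 ∧ s (B u q) = 0 := by
    intro u hua hub
    have n1 := hminor 1 one_pos u p
    have n2 := hminor 2 two_pos u p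
    have n3 := hminor 1 one_pos u q
    rw [hua, hub, hpa, hpb, hpp] at n1 n2
    rw [hua, hub, hqa, hqb, hqq] at n3
    have g1 : s (B u p) ^ 2 = 0 := by nlinarith
    have g2 : s (B u u) = 0 := by nlinarith
    have g3 : s (B u q) ^ 2 = 0 := by rw [g2] at n3; nlinarith
    exact ⟨g2, by simpa using g1, by simpa using g3⟩
  have hs : ∀ v : Fin n → ℝ, s (B v v) = 2 * s (B p q) * ((v ⬝ᵥ a) * (v ⬝ᵥ b)) := by
    intro v
    obtain ⟨u, hv⟩ : ∃ u, v = u + (v ⬝ᵥ a) • p + (v ⬝ᵥ b) • q :=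
      ⟨v - (v ⬝ᵥ a) • p - (v ⬝ᵥ b) • q, by abel⟩
    have hu' : u = v - (v ⬝ᵥ a) • p - (v ⬝ᵥ b) • q := by
      conv_rhs => lhs; lhs; rw [hv]
      abel
    obtain ⟨g1, g2, g3⟩ := hu u
      (by rw [hu']; simp only [sub_dotProduct, smul_dotProduct, hpa, hqa, smul_eq_mul]; ring)
      (by rw [hu']; simp only [sub_dotProduct, smul_dotProduct, hpb, hqb, smul_eq_mul]; ring)
    generalize v ⬝ᵥ a = α at *
    generalize v ⬝ᵥ b = β at *
    subst hv
    simp only [B_add, B_add_right, B_smul, B_smul_right, map_add, map_smul, smul_eq_mul,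
      B_comm p u, B_comm q u, B_comm q p, g1, g2, g3, hpp, hqq]
    ring
  have hsign : 2 * s (B p q) = 1 := by
    rcases (sq_eq_sq_iff_eq_or_eq_neg.1 (hpq.trans (one_pow 2).symm)) with h | h
    · exact h
    · exfalso
      have hsb : s = -bil a b := by
        apply ext_fun
        intro v
        rw [hs, h, LinearMap.neg_apply, bil_B]; ring
      have hak : 0 < a k := by
        rcases (ha k).eq_or_lt with h0 | h0
        · rw [hD, ← h0] at hkl
          nlinarith [mul_nonneg (ha l) (hb k)]
        · exact h0
      have hbl : 0 < b l := by
        rcases (hb l).eq_or_lt with h0 | h0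
        · rw [hD, ← h0] at hkl
          nlinarith [mul_nonneg (ha l) (hb k)]
        · exact h0
      have hbs : 0 < b l + b k := by linarith [hb k]
      set t := (a l + a k) / (b l + b k) with ht
      have ht0 : 0 < t := div_pos (by linarith [ha l]) hbs
      obtain ⟨w, hw0, hw⟩ := H t ht0
      have h1 := hw (B (e k) (e l))
      rw [hsb] at h1
      simp only [LinearMap.neg_apply, bil_B, e, single_dotProduct, one_mul] at h1
      have h2 : (a k - t * b k) * (a l - t * b l) = w k * w l := by linarith
      have h3 : t * b k < a k := by
        rw [ht, div_mul_eq_mul_div, div_lt_iff₀ hbs]; linarith [hkl, hD]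
      have h4 : a l < t * b l := by
        rw [ht, div_mul_eq_mul_div, lt_div_iff₀ hbs]; linarith [hkl, hD]
      nlinarith [mul_nonneg (hw0 k) (hw0 l), mul_pos (sub_pos.2 h3) (sub_pos.2 h4)]
  apply ext_fun
  intro v
  rw [hs, hsign, bil_B]; ring

theorem main_form {n : ℕ} (L : SymMat n →ₗ[ℝ] SymMat n) (hL : L '' COPcone n = COPcone n) :
    ∃ M : Matrix (Fin n) (Fin n) ℝ, (∀ i j, 0 ≤ M i j) ∧
        ∀ A : SymMat n,
          (L A : Matrix (Fin n) (Fin n) ℝ) = M * (A : Matrix (Fin n) (Fin n) ℝ) * Mᵀ := by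
  obtain ⟨R, hLR, hRL, hR⟩ := bijL L hL
  have he : ∀ i : Fin n, ∀ j, 0 ≤ (e i : Fin n → ℝ) j := by
    intro i j
    simp only [e, Pi.single_apply]; split_ifs <;> norm_num
  choose a ha haL using fun i : Fin n => pullback L hL (e i) (he i)
  have hab : ∀ i j : Fin n, ∀ A, bil (e i) (e j) (L A) = bil (a i) (a j) A := by
    intro i j A
    by_cases hij : i = j
    · subst hij; exact haL i A
    have hind : ∃ k l, a i k * a j l - a i l * a j k ≠ 0 := by
      by_contra! hcon
      have hprop : (∃ c : ℝ, ∀ C, bil (e j) (e j) C = c * bil (e i) (e i) C) ∨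
          ∀ C, bil (e i) (e i) C = 0 := by
        by_cases h0 : ∃ k, a i k ≠ 0
        · obtain ⟨k, hk⟩ := h0
          refine Or.inl ⟨(a j k / a i k) ^ 2, fun C => ?_⟩
          have hb : a j = (a j k / a i k) • a i := by
            funext l
            have := hcon k l
            simp; field_simp; linarith
          have h1 := haL j (R C)
          have h2 := haL i (R C)
          rw [hLR] at h1 h2
          rw [h1, h2, hb, bil_smul, bil_smul_right]
          simp only [← hb]
          ring
        · push Not at h0
          refine Or.inr fun C => ?_
          have h2 := haL i (R C)
          rw [hLR] at h2
          have : a i = 0 := funext h0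
          rw [h2, this]; simp [bil_def]
      rcases hprop with ⟨c, hc⟩ | hc
      · have h1 := hc (B (e j) (e j))
        simp [bil_B, e, hij] at h1
      · have h1 := hc (B (e i) (e i))
        simp [bil_B, e] at h1
    have H : ∀ t : ℝ, 0 < t → ∃ w : Fin n → ℝ, (∀ i, 0 ≤ w i) ∧
        ∀ A, bil (a i) (a i) A + 2 * t * ((bil (e i) (e j)).comp L) A + t ^ 2 * bil (a j) (a j) A
          = bil w w A := by
      intro t ht
      obtain ⟨w, hw0, hw⟩ := pullback L hL (e i + t • e j)
        (fun m => add_nonneg (he i m) (mul_nonneg ht.le (he j m)))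
      refine ⟨w, hw0, fun A => ?_⟩
      rw [← hw, bil_add, bil_add_right, bil_add_right, bil_smul, bil_smul, bil_smul_right,
        bil_smul_right, bil_comm (e j) (e i), haL, haL, LinearMap.comp_apply]
      ring
    obtain ⟨k, l, hkl⟩ := hind
    have : (bil (e i) (e j)).comp L = bil (a i) (a j) := by
      rcases hkl.lt_or_gt with h | h
      · exact cross_aux (a i) (a j) (ha i) (ha j) _ H l k (by linarith)
      · exact cross_aux (a i) (a j) (ha i) (ha j) _ H k l h
    rw [← this]; rfl
  refine ⟨Matrix.of a, ha, fun A => ?_⟩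
  ext i j
  have h1 := hab i j A
  have h2 : bil (e i) (e j) (L A) = (L A).1 i j := by
    simp [bil_def, e]
  rw [← h2, h1, bil_def]
  rw [Matrix.mul_assoc, Matrix.mul_apply]
  simp [dotProduct, mulVec, Matrix.mul_apply]

theorem row_unique {n : ℕ} (M N : Matrix (Fin n) (Fin n) ℝ) (hM : ∀ i j, 0 ≤ M i j)
    (hN : ∀ i j, 0 ≤ N i j) (h1 : M * N = 1) (h2 : N * M = 1) : ∀ i, ∃! j, M i j ≠ 0 := by
  have hz : ∀ i k j, i ≠ k → M i j * N j k = 0 := by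
    intro i k j hik
    have h := congrFun (congrFun h1 i) k
    rw [Matrix.mul_apply, Matrix.one_apply_ne hik] at h
    exact (Finset.sum_eq_zero_iff_of_nonneg
      (fun j _ => mul_nonneg (hM i j) (hN j k))).1 h j (Finset.mem_univ j)
  intro i
  have hex : ∃ j, M i j ≠ 0 := by
    by_contra! hc
    have h := congrFun (congrFun h1 i) i
    simp [Matrix.mul_apply, hc] at h
  obtain ⟨j, hj⟩ := hex
  refine ⟨j, hj, fun j' hj' => ?_⟩
  by_contra hne
  have hrow : ∀ k, k ≠ i → N j k = 0 := by
    intro k hk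
    exact (mul_eq_zero.1 (hz i k j hk.symm)).resolve_left hj
  have hs : ∀ m, (N * M) j m = N j i * M i m := by
    intro m
    rw [Matrix.mul_apply, Finset.sum_eq_single i]
    · intro k _ hk; rw [hrow k hk, zero_mul]
    · simp
  have g1 := hs j
  have g2 := hs j'
  rw [h2, Matrix.one_apply_eq] at g1
  rw [h2, Matrix.one_apply_ne (Ne.symm hne)] at g2
  rcases mul_eq_zero.1 g2.symm with h | h
  · rw [h] at g1; simp at g1
  · exact hj' h

theorem forward {n : ℕ} (L : SymMat n →ₗ[ℝ] SymMat n) (hL : L '' COPcone n = COPcone n) :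
    ∃ M : Matrix (Fin n) (Fin n) ℝ, (∀ i j, 0 ≤ M i j) ∧ IsMonomial M ∧
        ∀ A : SymMat n,
          (L A : Matrix (Fin n) (Fin n) ℝ) = M * (A : Matrix (Fin n) (Fin n) ℝ) * Mᵀ := by
  obtain ⟨R, hLR, hRL, hR⟩ := bijL L hL
  obtain ⟨M, hM, hLM⟩ := main_form L hL
  obtain ⟨N, hN, hRN⟩ := main_form R hR
  have hP : ∀ A : SymMat n, (M * N) * A.1 * (M * N)ᵀ = A.1 := by
    intro A
    have := hLM (R A)
    rw [hLR, hRN] at this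
    conv_rhs => rw [this]
    simp only [Matrix.transpose_mul, Matrix.mul_assoc]
  have hPn : ∀ i j, 0 ≤ (M * N) i j := fun i j => by
    rw [Matrix.mul_apply]
    exact Finset.sum_nonneg fun k _ => mul_nonneg (hM i k) (hN k j)
  have hentry : ∀ i k, (M * N) i k * (M * N) i k = (1 : Matrix (Fin n) (Fin n) ℝ) i k := by
    intro i k
    have h := congrFun (congrFun (hP (B (e k) (e k))) i) i
    have hB : (B (e k) (e k)).1 = Matrix.vecMulVec (e k) (e k) := by
      ext x y; simp [B, Matrix.vecMulVec_apply]
    rw [hB, Matrix.mul_vecMulVec, Matrix.vecMulVec_mul, Matrix.vecMul_transpose,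
      Matrix.vecMulVec_apply, Matrix.vecMulVec_apply] at h
    simp only [e, Matrix.mulVec_single_one, Matrix.col_apply] at h
    rw [h, Matrix.one_apply, Pi.single_apply]
    split_ifs <;> simp
  have h1 : M * N = 1 := by
    ext i k
    have h := hentry i k
    have hn := hPn i k
    rw [Matrix.one_apply] at h ⊢
    split_ifs at h ⊢
    · nlinarith
    · simpa using h
  have h2 : N * M = 1 := mul_eq_one_comm.1 h1
  refine ⟨M, hM, ⟨row_unique M N hM hN h1 h2, ?_⟩, hLM⟩
  have := row_unique Mᵀ Nᵀ (fun i j => hM j i) (fun i j => hN j i)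
    (by rw [← Matrix.transpose_mul, h2, Matrix.transpose_one])
    (by rw [← Matrix.transpose_mul, h1, Matrix.transpose_one])
  simpa using this

theorem cop_conj {n : ℕ} (M : Matrix (Fin n) (Fin n) ℝ) (hM : ∀ i j, 0 ≤ M i j)
    (A A' : SymMat n) (hA : A ∈ COPcone n) (h : A'.1 = M * A.1 * Mᵀ) : A' ∈ COPcone n := by
  intro x hx
  have h1 := hA (Mᵀ *ᵥ x) (fun i => by
    simp only [mulVec, dotProduct, Matrix.transpose_apply]
    exact Finset.sum_nonneg fun j _ => mul_nonneg (hM j i) (hx j))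
  rw [h, ← Matrix.mulVec_mulVec, ← Matrix.mulVec_mulVec, Matrix.dotProduct_mulVec,
    ← Matrix.mulVec_transpose]
  exact h1

theorem backward {n : ℕ} (L : SymMat n →ₗ[ℝ] SymMat n) (M : Matrix (Fin n) (Fin n) ℝ)
    (hM : ∀ i j, 0 ≤ M i j) (hmon : IsMonomial M)
    (hLM : ∀ A : SymMat n, (L A).1 = M * A.1 * Mᵀ) : L '' COPcone n = COPcone n := by
  apply Set.Subset.antisymm
  · rintro _ ⟨A, hA, rfl⟩
    exact cop_conj M hM A _ hA (hLM A)
  · intro C hC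
    let N : Matrix (Fin n) (Fin n) ℝ := Matrix.of fun j i => (M i j)⁻¹
    have hMN : M * N = 1 := by
      ext i k
      rw [Matrix.mul_apply, Matrix.one_apply]
      simp only [N, Matrix.of_apply]
      split_ifs with hik
      · subst hik
        obtain ⟨j, hj, hu⟩ := hmon.1 i
        rw [Finset.sum_eq_single j]
        · exact mul_inv_cancel₀ hj
        · intro m _ hm
          have : M i m = 0 := by
            by_contra h0; exact hm (hu m h0)
          simp [this]
        · simp
      · refine Finset.sum_eq_zero fun j _ => ?_
        by_contra h0
        have g1 : M i j ≠ 0 := fun h => h0 (by simp [h])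
        have g2 : M k j ≠ 0 := fun h => h0 (by simp [h])
        exact hik ((hmon.2 j).unique g1 g2)
    have hsym : (N * C.1 * Nᵀ).IsSymm := by
      have hc : C.1ᵀ = C.1 := C.2
      unfold Matrix.IsSymm
      simp only [Matrix.transpose_mul, Matrix.transpose_transpose, hc, Matrix.mul_assoc]
    let A : SymMat n := ⟨N * C.1 * Nᵀ, hsym⟩
    refine ⟨A, cop_conj N (fun i j => inv_nonneg.2 (hM j i)) C A hC rfl, ?_⟩
    apply Subtype.ext
    rw [hLM]
    show M * (N * C.1 * Nᵀ) * Mᵀ = C.1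
    have : M * (N * C.1 * Nᵀ) * Mᵀ = (M * N) * C.1 * (M * N)ᵀ := by
      simp only [Matrix.transpose_mul, Matrix.mul_assoc]
    rw [this, hMN]; simp

end CopAux

theorem stmt_0 {n : ℕ} (L : SymMat n →ₗ[ℝ] SymMat n) :
    (L '' COPcone n = COPcone n) ↔
      ∃ M : Matrix (Fin n) (Fin n) ℝ, (∀ i j, 0 ≤ M i j) ∧ IsMonomial M ∧
        ∀ A : SymMat n,
          (L A : Matrix (Fin n) (Fin n) ℝ) = M * (A : Matrix (Fin n) (Fin n) ℝ) * Mᵀ := by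
  constructor
  · exact CopAux.forward L
  · rintro ⟨M, h1, h2, h3⟩
    exact CopAux.backward L M h1 h2 h3
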